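/- arXiv:1207.1233 — 2 statements merged into one kernel-verified Lean document; each statement's English description precedes it below -/
import Mathlib

section
/- Let A ⊆ {0,1}^n and let g : {0,1}^n → ℝ be a function vanishing outside A. Then E(g,g) ≥ 2 · (1/(2^n · |A|)) · log₂(2^n/|A|) · (∑_{x∈A} |g(x)|)², where E(g,g) = (1/2^n) ∑_x ∑_{y∼x} (g(x) − g(y))². -/
open Finset

/-!
Induct on the dimension. Cutting the cube along one coordinate splits `A` into slices of sizes
`a ≥ b` and the mass `∑ ‖g‖` into `s + r`. Each edge across the cut is counted twice in the
Dirichlet form, and by Cauchy–Schwarz these edges contribute at least `2 (s - r)² / a`. The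
induction thus reduces to a two-point inequality for `log₂ (N / a) · s² / a`. With
`t = log₂ (2a / (a + b))`, the contribution of `log₂ (N / a)` to that inequality is Titu's lemma,
and that of `t` follows from `t ≤ 1 - b / a` (concavity of the logarithm) and `2t ≤ log₂ (a / b)`
(AM–GM).
-/

section RealInequalities

variable {a b N s r t x : ℝ}

lemma le_logb_two_one_add (hx₀ : 0 ≤ x) (hx₁ : x ≤ 1) : x ≤ Real.logb 2 (1 + x) := by
  rw [Real.le_logb_iff_rpow_le one_lt_two (by positivity)]
  have bernoulli := rpow_one_add_le_one_add_mul_self (s := 1) (by norm_num) hx₀ hx₁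
  rwa [one_add_one_eq_two, mul_one] at bernoulli

lemma logb_two_mul_div_add_le_one_sub_div (hb : 0 < b) (hba : b ≤ a) :
    Real.logb 2 (2 * a / (a + b)) ≤ 1 - b / a := by
  have ha : 0 < a := hb.trans_le hba
  have hlog : Real.logb 2 (2 * a / (a + b)) = 1 - Real.logb 2 (1 + b / a) := by
    rw [show 2 * a / (a + b) = 2 / (1 + b / a) by field_simp,
      Real.logb_div two_ne_zero (by positivity), Real.logb_self_eq_one one_lt_two]
  rw [hlog]
  exact sub_le_sub_left (le_logb_two_one_add (by positivity) (div_le_one_of_le₀ hba ha.le)) 1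

lemma two_mul_logb_two_mul_div_add_le (ha : 0 < a) (hb : 0 < b) :
    2 * Real.logb 2 (2 * a / (a + b)) ≤ Real.logb 2 (a / b) := by
  have amgm : (2 * a / (a + b)) ^ 2 ≤ a / b := by
    rw [div_pow, div_le_div_iff₀ (by positivity) hb]
    nlinarith [mul_nonneg ha.le (sq_nonneg (a - b))]
  calc 2 * Real.logb 2 (2 * a / (a + b)) = Real.logb 2 ((2 * a / (a + b)) ^ 2) := by
        rw [Real.logb_pow, Nat.cast_ofNat]
    _ ≤ Real.logb 2 (a / b) := Real.logb_le_logb_of_le one_lt_two (by positivity) amgm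

lemma add_sq_div_add_le (ha : 0 < a) (hb : 0 < b) :
    (s + r) ^ 2 / (a + b) ≤ s ^ 2 / a + r ^ 2 / b := by
  simpa using sq_sum_div_le_sum_sq_div univ ![s, r] (g := ![a, b])
    (by simp [Fin.forall_fin_two, ha, hb])

lemma one_sub_div_mul_le_sub_sq_div (ha : 0 < a) (hb : 0 < b) :
    (1 - b / a) * ((s + r) ^ 2 / (a + b) - 2 * (r ^ 2 / b)) ≤ (s - r) ^ 2 / a := by
  have gap : (s - r) ^ 2 / a - (1 - b / a) * ((s + r) ^ 2 / (a + b) - 2 * (r ^ 2 / b)) =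
      2 * (r * a - s * b) ^ 2 / (a * b * (a + b)) := by
    field_simp
    ring
  rw [← sub_nonneg, gap]
  positivity

lemma mul_add_sq_div_add_le (ha : 0 < a) (hb : 0 < b) (ht₀ : 0 ≤ t) (ht₁ : t ≤ 1 - b / a) :
    t * ((s + r) ^ 2 / (a + b)) ≤ 2 * t * (r ^ 2 / b) + (s - r) ^ 2 / a := by
  suffices t * ((s + r) ^ 2 / (a + b) - 2 * (r ^ 2 / b)) ≤ (s - r) ^ 2 / a by linarith
  rcases le_total ((s + r) ^ 2 / (a + b) - 2 * (r ^ 2 / b)) 0 with hneg | hpos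
  · exact (mul_nonpos_of_nonneg_of_nonpos ht₀ hneg).trans (by positivity)
  · exact (mul_le_mul_of_nonneg_right ht₁ hpos).trans (one_sub_div_mul_le_sub_sq_div ha hb)

/-- Half the lower bound for the unnormalised Dirichlet form of a function of total mass `s`
supported on `a` of the `N` points of a cube. It vanishes for `a = 0`, because division by zero
gives zero, so empty supports need no separate treatment. -/
noncomputable def massBound (N a s : ℝ) : ℝ := Real.logb 2 (N / a) * (s ^ 2 / a)

lemma massBound_two_mul (hN : 0 < N) (ha : 0 < a) :
    massBound (2 * N) a s = massBound N a s + s ^ 2 / a := by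
  unfold massBound
  rw [mul_div_assoc, Real.logb_mul two_ne_zero (by positivity), Real.logb_self_eq_one one_lt_two]
  ring

lemma massBound_two_mul_add_le (hb : 0 < b) (hba : b ≤ a) (haN : a ≤ N) :
    massBound (2 * N) (a + b) (s + r) ≤
      massBound N a s + massBound N b r + (s - r) ^ 2 / a := by
  have ha : 0 < a := hb.trans_le hba
  have hN : 0 < N := ha.trans_le haN
  set t := Real.logb 2 (2 * a / (a + b))
  set P := Real.logb 2 (N / a)
  have log_union : Real.logb 2 (2 * N / (a + b)) = P + t := by
    rw [← Real.logb_mul (by positivity) (by positivity)]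
    congr 1
    field_simp
  have log_small : Real.logb 2 (N / b) = P + Real.logb 2 (a / b) := by
    rw [← Real.logb_mul (by positivity) (by positivity), div_mul_div_cancel₀ ha.ne']
  have hP : 0 ≤ P := Real.logb_nonneg one_lt_two ((one_le_div ha).2 haN)
  have ht : 0 ≤ t := Real.logb_nonneg one_lt_two ((one_le_div (by positivity)).2 (by linarith))
  have titu : P * ((s + r) ^ 2 / (a + b)) ≤ P * (s ^ 2 / a + r ^ 2 / b) :=
    mul_le_mul_of_nonneg_left (add_sq_div_add_le ha hb) hP
  have cut : t * ((s + r) ^ 2 / (a + b)) ≤ 2 * t * (r ^ 2 / b) + (s - r) ^ 2 / a :=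
    mul_add_sq_div_add_le ha hb ht (logb_two_mul_div_add_le_one_sub_div hb hba)
  have small : 2 * t * (r ^ 2 / b) ≤ Real.logb 2 (a / b) * (r ^ 2 / b) :=
    mul_le_mul_of_nonneg_right (two_mul_logb_two_mul_div_add_le ha hb) (by positivity)
  simp only [massBound, log_union, log_small, add_mul]
  linarith

end RealInequalities

section FiniteSums

variable {α E : Type*} [SeminormedAddCommGroup E] {A B : Finset α} {f g : α → E}

lemma sum_norm_sub_sum_norm_le (hg : ∀ x, x ∉ B → g x = 0) :
    ∑ x ∈ A, ‖f x‖ - ∑ x ∈ B, ‖g x‖ ≤ ∑ x ∈ A, ‖f x - g x‖ := by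
  classical
  have hAB : ∑ x ∈ A, ‖g x‖ ≤ ∑ x ∈ B, ‖g x‖ := by
    rw [← sum_filter_of_ne fun x _ hx ↦ not_not.1 fun hxB ↦ hx (by rw [hg x hxB, norm_zero])]
    exact sum_le_sum_of_subset_of_nonneg (fun x hx ↦ (mem_filter.1 hx).2) fun _ _ _ ↦ norm_nonneg _
  calc ∑ x ∈ A, ‖f x‖ - ∑ x ∈ B, ‖g x‖
      ≤ ∑ x ∈ A, ‖f x‖ - ∑ x ∈ A, ‖g x‖ := sub_le_sub_left hAB _
    _ = ∑ x ∈ A, (‖f x‖ - ‖g x‖) := (sum_sub_distrib _ _).symm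
    _ ≤ ∑ x ∈ A, ‖f x - g x‖ := sum_le_sum fun x _ ↦ norm_sub_norm_le (f x) (g x)

variable [Fintype α]

lemma sq_sum_norm_sub_le_card_mul_sum_sq :
    (∑ x ∈ A, ‖f x - g x‖) ^ 2 ≤ #A * ∑ x, ‖f x - g x‖ ^ 2 :=
  sq_sum_le_card_mul_sum_sq.trans <| mul_le_mul_of_nonneg_left
    (sum_le_univ_sum_of_nonneg fun _ ↦ sq_nonneg _) (Nat.cast_nonneg _)

lemma sq_sum_norm_sub_sum_norm_le (hf : ∀ x, x ∉ A → f x = 0) (hg : ∀ x, x ∉ B → g x = 0)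
    (hBA : #B ≤ #A) :
    (∑ x ∈ A, ‖f x‖ - ∑ x ∈ B, ‖g x‖) ^ 2 ≤ #A * ∑ x, ‖f x - g x‖ ^ 2 := by
  rcases le_total (∑ x ∈ B, ‖g x‖) (∑ x ∈ A, ‖f x‖) with h | h
  · exact (pow_le_pow_left₀ (sub_nonneg.2 h) (sum_norm_sub_sum_norm_le hg) 2).trans
      sq_sum_norm_sub_le_card_mul_sum_sq
  · calc (∑ x ∈ A, ‖f x‖ - ∑ x ∈ B, ‖g x‖) ^ 2
        = (∑ x ∈ B, ‖g x‖ - ∑ x ∈ A, ‖f x‖) ^ 2 := sub_sq_comm _ _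
      _ ≤ (∑ x ∈ B, ‖g x - f x‖) ^ 2 :=
        pow_le_pow_left₀ (sub_nonneg.2 h) (sum_norm_sub_sum_norm_le hf) 2
      _ ≤ #B * ∑ x, ‖g x - f x‖ ^ 2 := sq_sum_norm_sub_le_card_mul_sum_sq
      _ ≤ #A * ∑ x, ‖f x - g x‖ ^ 2 := by
        simp only [norm_sub_rev (g _)]
        gcongr

lemma massBound_two_mul_card_le (hf : ∀ x, x ∉ A → f x = 0) (hg : ∀ x, x ∉ B → g x = 0) :
    massBound (2 * Fintype.card α) (#A + #B) (∑ x ∈ A, ‖f x‖ + ∑ x ∈ B, ‖g x‖) ≤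
      massBound (Fintype.card α) #A (∑ x ∈ A, ‖f x‖) +
        massBound (Fintype.card α) #B (∑ x ∈ B, ‖g x‖) + ∑ x, ‖f x - g x‖ ^ 2 := by
  wlog hBA : #B ≤ #A generalizing A B f g
  · have swapped := this hg hf (le_of_not_ge hBA)
    simp only [norm_sub_rev (g _)] at swapped
    rwa [add_comm (#B : ℝ), add_comm (∑ x ∈ B, _), add_comm (massBound _ #B _)] at swapped
  rcases A.eq_empty_or_nonempty with rfl | hA
  · obtain rfl : B = ∅ := by simpa using hBA
    simp only [massBound, card_empty, Nat.cast_zero, add_zero, div_zero, mul_zero, zero_add]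
    positivity
  have hA₀ : (0 : ℝ) < #A := by exact_mod_cast hA.card_pos
  have hAN : (#A : ℝ) ≤ Fintype.card α := by exact_mod_cast A.card_le_univ
  have cut : (∑ x ∈ A, ‖f x‖ - ∑ x ∈ B, ‖g x‖) ^ 2 / #A ≤ ∑ x, ‖f x - g x‖ ^ 2 :=
    (div_le_iff₀' hA₀).2 (sq_sum_norm_sub_sum_norm_le hf hg hBA)
  rcases B.eq_empty_or_nonempty with rfl | hB
  · simp only [sum_empty, sub_zero] at cut
    simp only [card_empty, Nat.cast_zero, sum_empty, add_zero,
      massBound_two_mul (hA₀.trans_le hAN) hA₀]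
    simpa only [massBound, div_zero, mul_zero, add_zero, add_le_add_iff_left] using cut
  · have hB₀ : (0 : ℝ) < #B := by exact_mod_cast hB.card_pos
    exact (massBound_two_mul_add_le hB₀ (by exact_mod_cast hBA) hAN).trans
      (add_le_add_right cut _)

end FiniteSums

section Cube

variable {ι E : Type*} [DecidableEq ι]

/-- The neighbour of the vertex `x` of the cube across the edge in direction `i`. -/
def flipBit (x : ι → Bool) (i : ι) : ι → Bool := Function.update x i (!x i)

lemma flipBit_injective (x : ι → Bool) : Function.Injective (flipBit x) := by
  intro i j hij
  by_contra hne
  simpa [flipBit, hne] using congrFun hij i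

lemma flipBit_eq_iff {x y : ι → Bool} {i : ι} :
    flipBit x i = y ↔ ∀ j, x j ≠ y j ↔ j = i := by
  simp only [flipBit, Function.update_eq_iff, Bool.not_eq_eq_eq_not, Bool.eq_not]
  grind

variable [Fintype ι]

lemma filter_card_filter_ne_eq_one (x : ι → Bool) :
    univ.filter (fun y => (univ.filter fun i => x i ≠ y i).card = 1) = univ.image (flipBit x) := by
  ext y
  simp only [mem_filter_univ, mem_image, mem_univ, true_and, card_eq_one, flipBit_eq_iff,
    Finset.ext_iff, mem_singleton]

variable [SeminormedAddCommGroup E]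

/-- The Dirichlet form of `g` on the cube without the normalisation `2⁻ⁿ`; each edge is counted
twice, once from either endpoint. -/
noncomputable def dirichletSum (g : (ι → Bool) → E) : ℝ := ∑ x, ∑ i, ‖g x - g (flipBit x i)‖ ^ 2

lemma dirichletSum_eq_sum_filter (g : (ι → Bool) → E) :
    dirichletSum g = ∑ x, ∑ y ∈ univ.filter
      (fun y => (univ.filter fun i => x i ≠ y i).card = 1), ‖g x - g y‖ ^ 2 := by
  simp only [dirichletSum, filter_card_filter_ne_eq_one, sum_image (flipBit_injective _).injOn]

end Cube

section Slices

variable {n : ℕ} {M E : Type*}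

lemma sum_cube_succ [AddCommMonoid M] (F : (Fin (n + 1) → Bool) → M) :
    ∑ x, F x = ∑ x, F (Fin.cons false x) + ∑ x, F (Fin.cons true x) := by
  rw [← (Fin.consEquiv fun _ ↦ Bool).sum_comp, Fintype.sum_prod_type, Fintype.sum_bool, add_comm]
  rfl

/-- The part of `A` in the facet of the cube where the first coordinate is `b`, as a subset of the
cube of one dimension less. -/
def cubeSlice (b : Bool) (A : Finset (Fin (n + 1) → Bool)) : Finset (Fin n → Bool) :=
  univ.filter fun x ↦ Fin.cons b x ∈ A

lemma mem_cubeSlice {b : Bool} {A : Finset (Fin (n + 1) → Bool)} {x : Fin n → Bool} :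
    x ∈ cubeSlice b A ↔ (Fin.cons b x : Fin (n + 1) → Bool) ∈ A :=
  mem_filter_univ x

lemma sum_eq_sum_cubeSlice_add [AddCommMonoid M] (A : Finset (Fin (n + 1) → Bool))
    (F : (Fin (n + 1) → Bool) → M) :
    ∑ x ∈ A, F x = ∑ x ∈ cubeSlice false A, F (Fin.cons false x) +
      ∑ x ∈ cubeSlice true A, F (Fin.cons true x) := by
  simp only [cubeSlice, sum_filter, ← sum_cube_succ fun x ↦ if x ∈ A then F x else 0,
    sum_ite_mem, univ_inter]

lemma card_eq_card_cubeSlice_add (A : Finset (Fin (n + 1) → Bool)) :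
    #A = #(cubeSlice false A) + #(cubeSlice true A) := by
  simpa only [card_eq_sum_ones] using sum_eq_sum_cubeSlice_add A fun _ ↦ 1

variable [SeminormedAddCommGroup E]

lemma dirichletSum_succ (g : (Fin (n + 1) → Bool) → E) :
    dirichletSum g = dirichletSum (fun x ↦ g (Fin.cons false x)) +
      dirichletSum (fun x ↦ g (Fin.cons true x)) +
      2 * ∑ x, ‖g (Fin.cons false x) - g (Fin.cons true x)‖ ^ 2 := by
  simp only [dirichletSum, flipBit, sum_cube_succ, Fin.sum_univ_succ, Fin.cons_zero, Fin.cons_succ,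
    Fin.update_cons_zero, ← Fin.cons_update, Bool.not_false, Bool.not_true, sum_add_distrib,
    norm_sub_rev (g (Fin.cons true _)) (g (Fin.cons false _))]
  ring

theorem two_mul_massBound_le_dirichletSum (A : Finset (Fin n → Bool)) (g : (Fin n → Bool) → E)
    (hg : ∀ x, x ∉ A → g x = 0) :
    2 * massBound (2 ^ n) #A (∑ x ∈ A, ‖g x‖) ≤ dirichletSum g := by
  induction n with
  | zero =>
    have hA : #A ≤ 1 := by simpa using A.card_le_univ
    interval_cases #A <;> simp [massBound, dirichletSum]
  | succ n ih =>
    have hslice (b : Bool) (x : Fin n → Bool) (hx : x ∉ cubeSlice b A) : g (Fin.cons b x) = 0 :=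
      hg _ (mt mem_cubeSlice.2 hx)
    have two_point := massBound_two_mul_card_le (hslice false) (hslice true)
    simp only [Fintype.card_pi, Fintype.card_bool, prod_const, card_univ, Fintype.card_fin,
      Nat.cast_pow, Nat.cast_ofNat] at two_point
    rw [dirichletSum_succ, sum_eq_sum_cubeSlice_add, card_eq_card_cubeSlice_add, Nat.cast_add,
      pow_succ']
    linarith [ih _ _ (hslice false), ih _ _ (hslice true)]

end Slices

theorem dirichlet_isoperimetric_general {E : Type*} [SeminormedAddCommGroup E] (n : ℕ)
    (A : Finset (Fin n → Bool)) (hA : A.Nonempty) (g : (Fin n → Bool) → E)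
    (hg : ∀ x, x ∉ A → g x = 0) :
    (1 / (2 : ℝ) ^ n) *
        ∑ x : Fin n → Bool, ∑ y ∈ univ.filter
            (fun y => (univ.filter fun i => x i ≠ y i).card = 1), ‖g x - g y‖ ^ 2 ≥
      2 * (1 / ((2 : ℝ) ^ n * (A.card : ℝ))) * Real.logb 2 ((2 : ℝ) ^ n / (A.card : ℝ)) *
        (∑ x ∈ A, ‖g x‖) ^ 2 := by
  calc 2 * (1 / ((2 : ℝ) ^ n * #A)) * Real.logb 2 ((2 : ℝ) ^ n / #A) * (∑ x ∈ A, ‖g x‖) ^ 2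
      = (1 / (2 : ℝ) ^ n) * (2 * massBound (2 ^ n) #A (∑ x ∈ A, ‖g x‖)) := by
        unfold massBound
        field_simp
    _ ≤ (1 / (2 : ℝ) ^ n) * dirichletSum g :=
        mul_le_mul_of_nonneg_left (two_mul_massBound_le_dirichletSum A g hg) (by positivity)
    _ = _ := by rw [dirichletSum_eq_sum_filter]

/-- For `g` supported on `A ⊆ {0,1}^n`,
`E(g,g) ≥ 2·(1/(2^n·|A|))·log₂(2^n/|A|)·(∑_{x∈A} |g(x)|)²`, where
`E(g,g) = (1/2^n) ∑_x ∑_{y∼x} (g(x)-g(y))²`. -/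
theorem dirichlet_isoperimetric (n : ℕ) (A : Finset (Fin n → Bool)) (hA : A.Nonempty)
    (g : (Fin n → Bool) → ℝ) (hg : ∀ x, x ∉ A → g x = 0) :
    (1 / (2 : ℝ) ^ n) *
        ∑ x : Fin n → Bool, ∑ y ∈ univ.filter
            (fun y => (univ.filter fun i => x i ≠ y i).card = 1), (g x - g y) ^ 2 ≥
      2 * (1 / ((2 : ℝ) ^ n * (A.card : ℝ))) * Real.logb 2 ((2 : ℝ) ^ n / (A.card : ℝ)) *
        (∑ x ∈ A, |g x|) ^ 2 := by
  simpa only [Real.norm_eq_abs, sq_abs] using dirichlet_isoperimetric_general n A hA g hg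
end

section
/- Let A be a subset of {0,1}^n with |∂A| ≤ (1+ε)·|A|·log₂(2^n/|A|) where ε = (ε'/(2n))·log₂(2^n/|A|) and 0 < ε' ≤ 1, and fix 0 < δ ≤ 1. For x uniform in A, let d_out(x) be the number of neighbors of x outside A. Then Pr[(1−δ)·log₂(2^n/|A|) ≤ d_out(x) ≤ (1+ε)(1+δ)·log₂(2^n/|A|)] ≥ 1 − ε'/δ². -/
open Finset

/-!
Write `d = log₂ (2^n / |A|)`. The heart of the matter is an `L¹` strengthening of the
edge-isoperimetric inequality `∑ (d_out - d) ≥ 0`: the sum over `A` of the positive parts of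
`d - d_out` is already at most `∑ (d_out - d) = |∂A| - |A| d`. Splitting the cube along one
coordinate changes `d - d_out` by an amount depending only on the sizes of the two faces and on
whether the neighbour across lies in `A`; since positive parts are subadditive, induction reduces
the claim to a two-point inequality. As `-d ≤ d_out - d ≤ n - d`, the `L¹` bound yields
`∑ (d_out - d)² ≤ 2n (|∂A| - |A| d)`, and Chebyshev's inequality finishes the proof.
-/

variable {n : ℕ}

/-- The codimension `log₂ (2^n / |A|)` of a set `A ⊆ {0,1}^n`, which is the usual one if `A` is a
subcube. The value at `A = ∅` is `0`, by the conventions for division and logarithm. -/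
noncomputable def codim (A : Finset (Fin n → Bool)) : ℝ :=
  Real.logb 2 ((2 : ℝ) ^ n / (#A : ℝ))

/-- The number `d_out(x)` of neighbours of `x` in the hypercube that lie outside `A`; adjacency is
Hamming distance one. -/
def outDegree (A : Finset (Fin n → Bool)) (x : Fin n → Bool) : ℕ :=
  #{y | y ∉ A ∧ hammingDist x y = 1}

/-- The edge boundary `∂A`, each edge being recorded as the pair of its endpoint in `A` and its
endpoint outside `A`. -/
def edgeBoundary (A : Finset (Fin n → Bool)) : Finset ((Fin n → Bool) × (Fin n → Bool)) :=
  {p ∈ univ ×ˢ univ | p.1 ∈ A ∧ p.2 ∉ A ∧ hammingDist p.1 p.2 = 1}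

theorem card_edgeBoundary (A : Finset (Fin n → Bool)) :
    #(edgeBoundary A) = ∑ x ∈ A, outDegree A x := by
  simp only [edgeBoundary, outDegree, card_filter, sum_product, ite_and, sum_ite_irrel,
    sum_const_zero, sum_ite_mem, univ_inter]

section TwoPoint

theorem mul_log_add_log_one_sub_nonpos {p : ℝ} (hp0 : 0 ≤ p) (hp : p ≤ 1 / 2) :
    p * Real.log (8 * p) + Real.log (1 - p) ≤ 0 := by
  rcases hp0.eq_or_lt with rfl | hp0
  · simp
  rcases le_total (8 * p) (Real.exp 1) with hsmall | hlarge
  · have hlog : Real.log (8 * p) ≤ 1 := (Real.log_le_iff_le_exp (by positivity)).2 hsmall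
    have hlog' := Real.log_le_sub_one_of_pos (show 0 < 1 - p by linarith)
    linarith [mul_le_mul_of_nonneg_left hlog hp0.le]
  · -- Both logarithms are bounded by their tangents at `p = 1 / 2`, where equality holds.
    have hlog : Real.log (8 * p) ≤ 2 * Real.log 2 + (2 * p - 1) := by
      rw [show 8 * p = 2 ^ 2 * (2 * p) by ring, Real.log_mul (by norm_num) (by positivity),
        Real.log_pow]
      exact add_le_add_right (Real.log_le_sub_one_of_pos (by positivity)) _
    have hlog' : Real.log (1 - p) ≤ -Real.log 2 + (1 - 2 * p) := by
      have h := Real.log_le_sub_one_of_pos (show 0 < 2 * (1 - p) by linarith)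
      rw [Real.log_mul two_ne_zero (by linarith)] at h
      linarith
    have hp1 : 1 - Real.log 2 ≤ p := by
      linarith [Real.exp_one_gt_d9, Real.log_two_gt_d9]
    calc p * Real.log (8 * p) + Real.log (1 - p)
        ≤ p * (2 * Real.log 2 + (2 * p - 1)) + (-Real.log 2 + (1 - 2 * p)) := by gcongr
      _ = (1 - 2 * p) * (1 - Real.log 2 - p) := by ring
      _ ≤ 0 := mul_nonpos_of_nonneg_of_nonpos (by linarith) (by linarith)

theorem mul_logb_add_mul_logb_le_sub {a b : ℝ} (ha : 0 ≤ a) (hb : 0 < b) (hab : a ≤ b) :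
    a * Real.logb 2 (2 * a / (a + b)) + (a + b) * Real.logb 2 (2 * b / (a + b)) ≤ b - a := by
  rcases ha.eq_or_lt with rfl | ha
  · simp [hb.ne']
  have hs : 0 < a + b := by positivity
  have hlog2 : 0 < Real.log 2 := Real.log_pos one_lt_two
  have key := mul_log_add_log_one_sub_nonpos (p := a / (a + b)) (by positivity)
    (by rw [div_le_iff₀ hs]; linarith)
  have hlog_a : Real.log (8 * (a / (a + b))) = 2 * Real.log 2 + Real.log (2 * a / (a + b)) := by
    rw [show 8 * (a / (a + b)) = 2 ^ 2 * (2 * a / (a + b)) by ring,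
      Real.log_mul (by norm_num) (by positivity), Real.log_pow]
    norm_num
  have hlog_b : Real.log (1 - a / (a + b)) = Real.log (2 * b / (a + b)) - Real.log 2 := by
    rw [← Real.log_div (by positivity) two_ne_zero]
    congr 1
    field_simp
    ring
  rw [hlog_a, hlog_b] at key
  have key' := mul_nonpos_of_nonneg_of_nonpos hs.le key
  simp only [Real.logb]
  rw [mul_div_assoc', mul_div_assoc', ← add_div, div_le_iff₀ hlog2]
  field_simp at key' ⊢
  linarith

variable {α : Type*} [DecidableEq α]

/-- The amount by which `codim A - outDegree A x` exceeds the same quantity for the face of `A`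
containing `x`, when a subset `A` of the cube is split along a coordinate into faces `B` and `C`,
and `y` is the image of `x` in `B`. -/
noncomputable def splitIncrement (B C : Finset α) (y : α) : ℝ :=
  Real.logb 2 (2 * #B / (#B + #C)) - if y ∈ C then 0 else 1

theorem splitIncrement_of_mem {B C : Finset α} {y : α} (hy : y ∈ C) :
    splitIncrement B C y = Real.logb 2 (2 * #B / (#B + #C)) := by
  simp [splitIncrement, hy]

theorem splitIncrement_of_notMem {B C : Finset α} {y : α} (hy : y ∉ C) :
    splitIncrement B C y = Real.logb 2 (2 * #B / (#B + #C)) - 1 := by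
  simp [splitIncrement, hy]

theorem sum_comp_splitIncrement (B C : Finset α) (g : ℝ → ℝ) :
    ∑ y ∈ B, g (splitIncrement B C y) =
      #(B ∩ C) * g (Real.logb 2 (2 * #B / (#B + #C))) +
        (#B - #(B ∩ C)) * g (Real.logb 2 (2 * #B / (#B + #C)) - 1) := by
  have hcard : (#(B \ C) : ℝ) = #B - #(B ∩ C) := by
    rw [eq_sub_iff_add_eq]; exact_mod_cast card_sdiff_add_card_inter B C
  rw [← sum_inter_add_sum_sdiff B C, sum_eq_card_nsmul fun y hy ↦ by
    rw [splitIncrement_of_mem (mem_inter.1 hy).2], sum_eq_card_nsmul fun y hy ↦ by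
    rw [splitIncrement_of_notMem (mem_sdiff.1 hy).2], nsmul_eq_mul, nsmul_eq_mul, hcard]

theorem sum_posPart_add_splitIncrement_nonpos_of_card_le {B C : Finset α} (hBC : #B ≤ #C) :
    ∑ y ∈ B, ((splitIncrement B C y)⁺ + splitIncrement B C y) +
      ∑ y ∈ C, ((splitIncrement C B y)⁺ + splitIncrement C B y) ≤ 0 := by
  rcases C.eq_empty_or_nonempty with rfl | hC
  · simp_all
  have hc : (0 : ℝ) < #C := by exact_mod_cast hC.card_pos
  have hBC' : (#B : ℝ) ≤ #C := by exact_mod_cast hBC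
  have hinter : (#(B ∩ C) : ℝ) ≤ #B := by exact_mod_cast card_le_card inter_subset_left
  have hB0 : (0 : ℝ) ≤ #B := Nat.cast_nonneg _
  have key := mul_logb_add_mul_logb_le_sub hB0 hc hBC'
  rw [sum_comp_splitIncrement B C fun t ↦ t⁺ + t, sum_comp_splitIncrement C B fun t ↦ t⁺ + t,
    inter_comm C B, add_comm (#C : ℝ) #B]
  set LB := Real.logb 2 (2 * #B / (#B + #C) : ℝ)
  set LC := Real.logb 2 (2 * #C / (#B + #C) : ℝ)
  have hLB : LB ≤ 0 := Real.logb_nonpos one_lt_two (by positivity)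
    (by rw [div_le_one (by positivity)]; linarith)
  have hLC0 : 0 ≤ LC := Real.logb_nonneg one_lt_two
    (by rw [one_le_div (by positivity)]; linarith)
  have hLC1 : LC ≤ 1 := by
    rw [Real.logb_le_iff_le_rpow one_lt_two (by positivity), Real.rpow_one,
      div_le_iff₀ (by positivity)]
    linarith
  rw [posPart_of_nonpos hLB, posPart_of_nonpos (by linarith : LB - 1 ≤ 0), posPart_of_nonneg hLC0,
    posPart_of_nonpos (by linarith : LC - 1 ≤ 0)]
  linarith [mul_le_mul_of_nonneg_right hinter (by linarith : 0 ≤ LC + 2)]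

theorem sum_posPart_add_splitIncrement_nonpos (B C : Finset α) :
    ∑ y ∈ B, ((splitIncrement B C y)⁺ + splitIncrement B C y) +
      ∑ y ∈ C, ((splitIncrement C B y)⁺ + splitIncrement C B y) ≤ 0 := by
  rcases le_total #B #C with hBC | hCB
  · exact sum_posPart_add_splitIncrement_nonpos_of_card_le hBC
  · rw [add_comm]
    exact sum_posPart_add_splitIncrement_nonpos_of_card_le hCB

end TwoPoint

section Face

/-- The part of `A` with first coordinate `b`, as a subset of the cube of one dimension less. -/
def face (A : Finset (Fin (n + 1) → Bool)) (b : Bool) : Finset (Fin n → Bool) :=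
  {y | Fin.cons b y ∈ A}

@[simp]
theorem mem_face {A : Finset (Fin (n + 1) → Bool)} {b : Bool} {y : Fin n → Bool} :
    y ∈ face A b ↔ Fin.cons b y ∈ A := by
  simp [face]

theorem sum_eq_sum_face {M : Type*} [AddCommMonoid M] (A : Finset (Fin (n + 1) → Bool))
    (f : (Fin (n + 1) → Bool) → M) :
    ∑ x ∈ A, f x = ∑ b, ∑ y ∈ face A b, f (Fin.cons b y) := by
  rw [← Fintype.sum_ite_mem A f, ← (Fin.consEquiv fun _ ↦ Bool).sum_comp, Fintype.sum_prod_type]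
  simp only [face, sum_filter]
  rfl

theorem card_eq_card_face_add_card_face (A : Finset (Fin (n + 1) → Bool)) (b : Bool) :
    #A = #(face A b) + #(face A !b) := by
  rw [card_eq_sum_ones, sum_eq_sum_face]
  cases b <;> simp [add_comm]

theorem hammingDist_cons {α : Type*} [DecidableEq α] (a b : α) (x y : Fin n → α) :
    hammingDist (Fin.cons a x : Fin (n + 1) → α) (Fin.cons b y) =
      (if a = b then 0 else 1) + hammingDist x y := by
  simp [hammingDist, Fin.card_filter_univ_succ']

theorem outDegree_cons (A : Finset (Fin (n + 1) → Bool)) (b : Bool) (y : Fin n → Bool) :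
    outDegree A (Fin.cons b y) = outDegree (face A b) y + if y ∈ face A !b then 0 else 1 := by
  have hsame : ∑ z, (if Fin.cons b z ∉ A ∧
      hammingDist (Fin.cons b y : Fin (n + 1) → Bool) (Fin.cons b z) = 1 then 1 else 0) =
      outDegree (face A b) y := by
    simp [outDegree, hammingDist_cons]
  have hopp : ∑ z, (if Fin.cons (!b) z ∉ A ∧
      hammingDist (Fin.cons b y : Fin (n + 1) → Bool) (Fin.cons (!b) z) = 1 then 1 else 0) =
      if y ∈ face A !b then 0 else 1 := by
    simp [hammingDist_cons, and_comm (a := _ ∉ A), ite_and]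
  rw [← hsame, ← hopp, outDegree, card_filter, sum_eq_sum_face]
  cases b <;> simp [face, add_comm]

theorem codim_eq_codim_face_add {A : Finset (Fin (n + 1) → Bool)} {b : Bool}
    (hA : (face A b).Nonempty) :
    codim A = codim (face A b) +
      Real.logb 2 (2 * #(face A b) / (#(face A b) + #(face A !b))) := by
  have : (0 : ℝ) < #(face A b) := by exact_mod_cast hA.card_pos
  rw [codim, codim, ← Real.logb_mul (by positivity) (by positivity),
    card_eq_card_face_add_card_face A b]
  congr 1
  push_cast
  field_simp
  ring

theorem codim_sub_outDegree_cons {A : Finset (Fin (n + 1) → Bool)} {b : Bool} {y : Fin n → Bool}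
    (hy : y ∈ face A b) :
    codim A - outDegree A (Fin.cons b y) =
      codim (face A b) - outDegree (face A b) y + splitIncrement (face A b) (face A !b) y := by
  rw [codim_eq_codim_face_add ⟨y, hy⟩, outDegree_cons, splitIncrement]
  push_cast
  ring

end Face

theorem outDegree_le (A : Finset (Fin n → Bool)) (x : Fin n → Bool) : outDegree A x ≤ n := by
  induction n with
  | zero => simp [outDegree, Subsingleton.elim _ x]
  | succ n ih =>
    rw [← Fin.cons_self_tail x, outDegree_cons]
    exact add_le_add (ih _ _) (by split_ifs <;> simp)

theorem codim_pos {A : Finset (Fin n → Bool)} (hA : A.Nonempty) (hA' : #A < 2 ^ n) :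
    0 < codim A := by
  refine Real.logb_pos one_lt_two ((one_lt_div (by exact_mod_cast hA.card_pos)).2 ?_)
  exact_mod_cast hA'

theorem sum_posPart_add_codim_sub_outDegree_nonpos (A : Finset (Fin n → Bool)) :
    ∑ x ∈ A, ((codim A - outDegree A x)⁺ + (codim A - outDegree A x)) ≤ 0 := by
  induction n with
  | zero =>
    refine (sum_eq_zero fun x hx ↦ ?_).le
    have hA : A = {x} := eq_singleton_iff_unique_mem.2 ⟨hx, fun y _ ↦ Subsingleton.elim y x⟩
    simp [codim, outDegree, hA, Subsingleton.elim _ x]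
  | succ n ih =>
    have hface (b : Bool) :
        ∑ y ∈ face A b, ((codim A - outDegree A (Fin.cons b y))⁺ +
          (codim A - outDegree A (Fin.cons b y))) ≤
        ∑ y ∈ face A b, ((splitIncrement (face A b) (face A !b) y)⁺ +
          splitIncrement (face A b) (face A !b) y) := by
      rw [← sub_nonpos, ← sum_sub_distrib]
      refine (sum_le_sum fun y hy ↦ ?_).trans (ih (face A b))
      rw [codim_sub_outDegree_cons hy]
      have posPart_add_le (s t : ℝ) : (s + t)⁺ ≤ s⁺ + t⁺ := by
        simpa [posPart_def] using max_add_add_le_max_add_max (a := s) (b := t) (c := 0) (d := 0)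
      linarith [posPart_add_le (codim (face A b) - outDegree (face A b) y)
        (splitIncrement (face A b) (face A !b) y)]
    rw [sum_eq_sum_face, Fintype.sum_bool]
    exact (add_le_add (hface true) (hface false)).trans (sum_posPart_add_splitIncrement_nonpos _ _)

theorem sum_outDegree_sub_codim (A : Finset (Fin n → Bool)) :
    ∑ x ∈ A, ((outDegree A x : ℝ) - codim A) = #(edgeBoundary A) - #A * codim A := by
  simp [card_edgeBoundary, sum_sub_distrib]

theorem sum_posPart_codim_sub_outDegree_le (A : Finset (Fin n → Bool)) :
    ∑ x ∈ A, (codim A - outDegree A x)⁺ ≤ #(edgeBoundary A) - #A * codim A := by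
  rw [← sum_outDegree_sub_codim, ← sub_nonpos, ← sum_sub_distrib]
  simpa only [← neg_sub (codim A), sub_neg_eq_add] using
    sum_posPart_add_codim_sub_outDegree_nonpos A

theorem card_mul_codim_le_card_edgeBoundary (A : Finset (Fin n → Bool)) :
    #A * codim A ≤ #(edgeBoundary A) :=
  sub_nonneg.1 <| (sum_nonneg fun _ _ ↦ posPart_nonneg _).trans
    (sum_posPart_codim_sub_outDegree_le A)

theorem sum_sq_outDegree_sub_codim_le (A : Finset (Fin n → Bool)) :
    ∑ x ∈ A, ((outDegree A x : ℝ) - codim A) ^ 2 ≤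
      (2 * n - codim A) * (#(edgeBoundary A) - #A * codim A) := by
  have hpoint (x : Fin n → Bool) : ((outDegree A x : ℝ) - codim A) ^ 2 ≤
      n * (codim A - outDegree A x)⁺ + (n - codim A) * (outDegree A x - codim A) := by
    have hn : (outDegree A x : ℝ) ≤ n := by exact_mod_cast outDegree_le A x
    have h0 : (0 : ℝ) ≤ outDegree A x := Nat.cast_nonneg _
    rcases le_total (codim A) (outDegree A x) with h | h
    · rw [posPart_of_nonpos (sub_nonpos.2 h)]
      linarith [mul_nonneg (sub_nonneg.2 h) (sub_nonneg.2 hn)]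
    · rw [posPart_of_nonneg (sub_nonneg.2 h)]
      linarith [mul_nonneg h0 (sub_nonneg.2 h)]
  calc ∑ x ∈ A, ((outDegree A x : ℝ) - codim A) ^ 2
      ≤ n * ∑ x ∈ A, (codim A - outDegree A x)⁺ +
          (n - codim A) * ∑ x ∈ A, ((outDegree A x : ℝ) - codim A) := by
        rw [mul_sum, mul_sum, ← sum_add_distrib]
        exact sum_le_sum fun x _ ↦ hpoint x
    _ ≤ n * (#(edgeBoundary A) - #A * codim A) +
          (n - codim A) * (#(edgeBoundary A) - #A * codim A) := by
        rw [sum_outDegree_sub_codim]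
        gcongr
        exact sum_posPart_codim_sub_outDegree_le A
    _ = (2 * n - codim A) * (#(edgeBoundary A) - #A * codim A) := by ring

theorem card_sub_sum_sq_div_sq_le {ι : Type*} (s : Finset ι) (f : ι → ℝ) {t : ℝ} (ht : 0 < t) :
    #s - (∑ x ∈ s, f x ^ 2) / t ^ 2 ≤ #{x ∈ s | |f x| ≤ t} := by
  rw [card_eq_sum_ones, card_filter, sum_div]
  push_cast
  rw [← sum_sub_distrib]
  refine sum_le_sum fun x _ ↦ ?_
  split_ifs with hx
  · exact sub_le_self _ (by positivity)
  · have : t ^ 2 ≤ f x ^ 2 := sq_le_sq.2 ((abs_of_pos ht).trans_le (not_le.1 hx).le)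
    exact sub_nonpos.2 ((one_le_div (by positivity)).2 this)

theorem nearly_isoperimetric_nearly_regular_general {A : Finset (Fin n → Bool)}
    (hA : A.Nonempty) (hA' : #A < 2 ^ n) {ε' δ : ℝ} (hδ : 0 < δ)
    (hiso : (#(edgeBoundary A) : ℝ) ≤ (1 + ε' / (2 * n) * codim A) * #A * codim A) :
    1 - ε' / δ ^ 2 ≤ (#{x ∈ A | |(outDegree A x : ℝ) - codim A| ≤ δ * codim A} : ℝ) / #A := by
  have hcard : (0 : ℝ) < #A := by exact_mod_cast hA.card_pos
  have hcodim : 0 < codim A := codim_pos hA hA'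
  have hn : n ≠ 0 := by
    rintro rfl
    exact hA.card_pos.ne' (by simpa using hA')
  have hvar : ∑ x ∈ A, ((outDegree A x : ℝ) - codim A) ^ 2 ≤ ε' * #A * codim A ^ 2 :=
    calc ∑ x ∈ A, ((outDegree A x : ℝ) - codim A) ^ 2
        ≤ (2 * n - codim A) * (#(edgeBoundary A) - #A * codim A) :=
          sum_sq_outDegree_sub_codim_le A
      _ ≤ 2 * n * (#(edgeBoundary A) - #A * codim A) :=
          mul_le_mul_of_nonneg_right (by linarith)
            (sub_nonneg.2 (card_mul_codim_le_card_edgeBoundary A))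
      _ ≤ 2 * n * (ε' / (2 * n) * #A * codim A ^ 2) := by
          gcongr
          linarith
      _ = ε' * #A * codim A ^ 2 := by field_simp
  rw [le_div_iff₀ hcard]
  calc (1 - ε' / δ ^ 2) * #A
      = #A - ε' * #A * codim A ^ 2 / (δ * codim A) ^ 2 := by field_simp
    _ ≤ #A - (∑ x ∈ A, ((outDegree A x : ℝ) - codim A) ^ 2) / (δ * codim A) ^ 2 := by gcongr
    _ ≤ _ := card_sub_sum_sq_div_sq_le A _ (mul_pos hδ hcodim)

/-- Nearly-isoperimetric sets are nearly regular: if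
`|∂A| ≤ (1+ε)·|A|·log₂(2^n/|A|)` with `ε = (ε'/(2n))·log₂(2^n/|A|)`, `0 < ε' ≤ 1`, and
`0 < δ ≤ 1`, then for `x` uniform in `A`, the outdegree `d_out(x)` lies in
`[(1-δ)·log₂(2^n/|A|), (1+ε)(1+δ)·log₂(2^n/|A|)]` with probability at least `1 - ε'/δ²`. -/
theorem nearly_isoperimetric_nearly_regular (n : ℕ) (A : Finset (Fin n → Bool))
    (hA : A.Nonempty) (hA' : A.card < 2 ^ n)
    (ε ε' δ : ℝ) (hε'0 : 0 < ε') (hε'1 : ε' ≤ 1) (hδ0 : 0 < δ) (hδ1 : δ ≤ 1)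
    (hε : ε = ε' / (2 * n) * Real.logb 2 ((2 : ℝ) ^ n / (A.card : ℝ)))
    (hiso : ((((univ : Finset (Fin n → Bool)) ×ˢ (univ : Finset (Fin n → Bool))).filter
        (fun p => p.1 ∈ A ∧ p.2 ∉ A ∧
          (univ.filter fun i => p.1 i ≠ p.2 i).card = 1)).card : ℝ) ≤
      (1 + ε) * (A.card : ℝ) * Real.logb 2 ((2 : ℝ) ^ n / (A.card : ℝ))) :
    (((A.filter (fun x =>
        (1 - δ) * Real.logb 2 ((2 : ℝ) ^ n / (A.card : ℝ)) ≤
          ((univ.filter (fun y => y ∉ A ∧ (univ.filter fun i => x i ≠ y i).card = 1)).card : ℝ) ∧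
        ((univ.filter (fun y => y ∉ A ∧ (univ.filter fun i => x i ≠ y i).card = 1)).card : ℝ) ≤
          (1 + ε) * (1 + δ) * Real.logb 2 ((2 : ℝ) ^ n / (A.card : ℝ)))).card : ℝ) / (A.card : ℝ))
      ≥ 1 - ε' / δ ^ 2 := by
  have hcodim := codim_pos hA hA'
  have hε0 : 0 ≤ ε := hε ▸ mul_nonneg (by positivity) hcodim.le
  have hslack : 0 ≤ ε * ((1 + δ) * codim A) := by positivity
  refine (nearly_isoperimetric_nearly_regular_general hA hA' hδ0 (hε ▸ hiso)).trans ?_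
  gcongr with x
  intro hdev
  obtain ⟨hlow, hupp⟩ := abs_le.1 hdev
  change (1 - δ) * codim A ≤ outDegree A x ∧ (outDegree A x : ℝ) ≤ (1 + ε) * (1 + δ) * codim A
  constructor <;> linarith
end
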